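/- Let d ≥ 1 and let Λ ⊂ ℝ^d be a full-rank lattice with dual lattice Λ⊥. Then the mesh ratio of Λ satisfies max( λ_d(Λ)/λ₁(Λ) , d⁻¹ · λ_d(Λ⊥)/λ₁(Λ⊥) ) ≤ ρ(Λ) ≤ min( √d · λ_d(Λ)/λ₁(Λ) , d · λ_d(Λ⊥)/λ₁(Λ⊥) ). -/

import Mathlib

open scoped RealInnerProductSpace

noncomputable section

/-- `ℝ^d` with the Euclidean norm. -/
abbrev Euc (d : ℕ) := EuclideanSpace ℝ (Fin d)

/-- `Λ` is the full-rank lattice generated by the columns of the invertible matrix `T`. -/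
def IsLatticeOf {d : ℕ} (Λ : Set (Euc d)) (T : Matrix (Fin d) (Fin d) ℝ) : Prop :=
  IsUnit T.det ∧ Λ = { v : Euc d | ∃ k : Fin d → ℤ, ∀ i, v i = ∑ j, T i j * (k j : ℝ) }

/-- Covering radius of `Λ` with respect to all of `ℝ^d`:
`h(Λ) = sup_{x ∈ ℝ^d} inf_{y ∈ Λ} ‖x - y‖₂`. -/
def covRad {d : ℕ} (Λ : Set (Euc d)) : ℝ :=
  ⨆ x : Euc d, sInf (Set.image (dist x) Λ)

/-- Separation radius of a lattice: half the length of the shortest nonzero vector. -/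
def sepRad {d : ℕ} (Λ : Set (Euc d)) : ℝ :=
  (1 / 2) * sInf (Set.image norm (Λ \ {0}))

/-- Mesh ratio `ρ(Λ) = h(Λ)/q(Λ)` of a lattice. -/
def meshRatio {d : ℕ} (Λ : Set (Euc d)) : ℝ := covRad Λ / sepRad Λ

/-- The `j`-th successive minimum of `Λ` with respect to the Euclidean unit ball:
`λ_j(Λ) = inf { r > 0 : dim span(Λ ∩ rB_d) ≥ j }`. -/
def succMin {d : ℕ} (Λ : Set (Euc d)) (j : ℕ) : ℝ :=
  sInf { r : ℝ | 0 < r ∧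
    j ≤ Module.finrank ℝ (Submodule.span ℝ (Λ ∩ Metric.closedBall (0 : Euc d) r)) }

/-- The dual lattice `Λ⊥ = { y : x·y ∈ ℤ for all x ∈ Λ }`. -/
def dualLat {d : ℕ} (Λ : Set (Euc d)) : Set (Euc d) :=
  { y | ∀ x ∈ Λ, ∃ n : ℤ, ⟪x, y⟫ = (n : ℝ) }

/-- The closed unit cube `[0,1]^d`. -/
def unitCube (d : ℕ) : Set (Euc d) := { x | ∀ i, 0 ≤ x i ∧ x i ≤ 1 }

/-- The half-open unit cube `[0,1)^d`. -/
def halfOpenCube (d : ℕ) : Set (Euc d) := { x | ∀ i, 0 ≤ x i ∧ x i < 1 }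

/-- Covering radius of a point set `P` with respect to the unit cube `[0,1]^d`. -/
def covRadCube {d : ℕ} (P : Set (Euc d)) : ℝ :=
  ⨆ x : unitCube d, sInf (Set.image (dist (x : Euc d)) P)

/-- Separation radius of a point set:
`q(P) = (1/2) min_{x ≠ y ∈ P} ‖x - y‖₂`. -/
def sepRadSet {d : ℕ} (P : Set (Euc d)) : ℝ :=
  (1 / 2) * sInf { r : ℝ | ∃ x ∈ P, ∃ y ∈ P, x ≠ y ∧ r = dist x y }

/-- Mesh ratio `ρ(P) = h(P)/q(P)` of a point set with respect to `[0,1]^d`. -/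
def meshRatioSet {d : ℕ} (P : Set (Euc d)) : ℝ := covRadCube P / sepRadSet P

/-- The constant `C_d = 2^d Γ(1+d/2) / π^{d/2}`. -/
def Cd (d : ℕ) : ℝ := 2 ^ d * Real.Gamma (1 + (d : ℝ) / 2) / Real.pi ^ ((d : ℝ) / 2)

/-!
The bounds by `λ_d(Λ) / λ₁(Λ)` are elementary. Rounding the coordinates of a point one at a time,
with respect to `d` independent lattice vectors of length at most `r`, gives `2h ≤ √d r`;
conversely, lattice points chosen close to consecutive points of a fine walk differ by lattice
vectors of length about `2h`, so such vectors span.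

The bounds by the dual lattice follow from `1 ≤ λ₁(Λ) λ_d(Λ⊥)`, `1 ≤ λ₁(Λ⊥) λ_d(Λ)` and Banaszczyk's
transference inequalities `2 h(Λ) λ₁(Λ⊥) ≤ d` and `λ₁(Λ) λ_d(Λ⊥) ≤ d`, valid for `d ≥ 2`; for
`d = 1` the mesh ratio and both quotients `λ_d / λ₁` equal `1`. Both transference inequalities
express one fact: if `u` has distance at least `r₁` from `Λ` and `r₁ r₂ = d / 2`, then some `y ∈ Λ⊥`
with `‖y‖ < r₂` has `⟪y, u⟫ ∉ ℤ`. Otherwise consider `∑ x ∈ Λ, exp (-π a ‖u + x‖²)`. All its terms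
are far out in the tail, so it is a small fraction of its value at `u = 0`; by Poisson summation it
is proportional to `∑ y ∈ Λ⊥, exp (-π ‖y‖² / a) cos (2π ⟪y, u⟫)`, where the cosines of all short `y`
are `1` and the long `y` contribute little, so it is also close to its value at `u = 0`.
-/

open MeasureTheory Module Submodule
open scoped FourierTransform

section DualLattice

variable {E : Type*} [NormedAddCommGroup E] [InnerProductSpace ℝ E]

/-- The dual `{y | ⟪x, y⟫ ∈ ℤ for all x ∈ L}` of a lattice `L` in a real inner product space, as an
additive subgroup (that is, a `ℤ`-submodule) of the ambient space. -/
def dualLattice (L : Submodule ℤ E) : Submodule ℤ E :=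
  LinearMap.BilinForm.dualSubmodule (innerₗ E) L

theorem mem_dualLattice {L : Submodule ℤ E} {y : E} :
    y ∈ dualLattice L ↔ ∀ x ∈ L, ∃ n : ℤ, ⟪x, y⟫ = n := by
  simp [dualLattice, LinearMap.BilinForm.mem_dualSubmodule, Submodule.mem_one, real_inner_comm,
    eq_comm]

theorem nondegenerate_innerₗ : LinearMap.BilinForm.Nondegenerate (innerₗ E) :=
  ⟨fun x hx ↦ inner_self_eq_zero.mp (hx x), fun x hx ↦ inner_self_eq_zero.mp (hx x)⟩

variable [FiniteDimensional ℝ E] {L : Submodule ℤ E} [DiscreteTopology L] [IsZLattice ℝ L]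

theorem dualLattice_eq_span {ι : Type*} [Finite ι] [DecidableEq ι] (b : Basis ι ℤ L) :
    dualLattice L = span ℤ (Set.range
      (LinearMap.BilinForm.dualBasis _ nondegenerate_innerₗ (b.ofZLatticeBasis ℝ L))) := by
  rw [← LinearMap.BilinForm.dualSubmodule_span_of_basis, b.ofZLatticeBasis_span ℝ, dualLattice]

instance : DiscreteTopology (dualLattice L) := by
  classical
  rw [dualLattice_eq_span (Free.chooseBasis ℤ L)]
  infer_instance

instance : IsZLattice ℝ (dualLattice L) := by
  classical
  refine ⟨?_⟩
  rw [dualLattice_eq_span (Free.chooseBasis ℤ L)]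
  exact IsZLattice.span_top

theorem exists_equiv_dualLattice {ι : Type*} [Fintype ι] (b : Basis ι ℤ L) :
    ∃ e : (ι → ℤ) ≃ dualLattice L,
      ∀ m v, ⟪(e m : E), v⟫ = ∑ i, m i * (b.ofZLatticeBasis ℝ L).repr v i := by
  classical
  let c := LinearMap.BilinForm.dualBasis _ nondegenerate_innerₗ (b.ofZLatticeBasis ℝ L)
  let e := (c.restrictScalars ℤ).equivFun.symm.trans
    (LinearEquiv.ofEq _ _ (dualLattice_eq_span b).symm)
  have coe_e (m : ι → ℤ) : (e m : E) = ∑ i, m i • c i := by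
    simp [e, Basis.equivFun_symm_apply]
  have inner_c (i : ι) (v : E) : ⟪c i, v⟫ = (b.ofZLatticeBasis ℝ L).repr v i := by
    conv_lhs => rw [← (b.ofZLatticeBasis ℝ L).sum_repr v, inner_sum]
    have (j : ι) : ⟪c i, b.ofZLatticeBasis ℝ L j⟫ = if j = i then 1 else 0 :=
      LinearMap.BilinForm.apply_dualBasis_left nondegenerate_innerₗ _ i j
    simp only [real_inner_smul_right, this, mul_ite, mul_one, mul_zero,
      Finset.sum_ite_eq', Finset.mem_univ, if_true]
  refine ⟨e.toEquiv, fun m v ↦ ?_⟩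
  simp [coe_e, sum_inner, inner_c, ← Int.cast_smul_eq_zsmul ℝ, real_inner_smul_left]

end DualLattice

section PoissonSummation

variable {E : Type*} [NormedAddCommGroup E] [InnerProductSpace ℝ E] [FiniteDimensional ℝ E]
  {L : Submodule ℤ E}

/-- The periodization `v ↦ ∑ x ∈ L, f (v + x)` of a continuous function, as a sum in the space
`C(E, ℂ)` with the topology of locally uniform convergence. -/
def periodization (L : Submodule ℤ E) (f : C(E, ℂ)) : C(E, ℂ) :=
  ∑' x : L, f.comp (ContinuousMap.addRight (x : E))

/-- Local uniform absolute convergence of the series `∑ x ∈ L, f (v + x)`. -/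
def LocallySummableTranslates (L : Submodule ℤ E) (f : C(E, ℂ)) : Prop :=
  ∀ K : TopologicalSpace.Compacts E,
    Summable fun x : L ↦ ‖(f.comp (ContinuousMap.addRight (x : E))).restrict (K : Set E)‖

theorem periodization_apply {f : C(E, ℂ)} (hf : LocallySummableTranslates L f) (v : E) :
    periodization L f v = ∑' x : L, f (v + x) :=
  (ContinuousMap.tsum_apply (ContinuousMap.summable_of_locally_summable_norm hf) v).symm

theorem periodization_add_mem {f : C(E, ℂ)} (hf : LocallySummableTranslates L f) (v : E) {x : E}
    (hx : x ∈ L) : periodization L f (v + x) = periodization L f v := by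
  simp only [periodization_apply hf]
  rw [← (Equiv.addLeft (⟨x, hx⟩ : L)).tsum_eq fun y : L ↦ f (v + y)]
  simp [add_assoc]

variable [DiscreteTopology L] [IsZLattice ℝ L] {ι : Type*}

section FundamentalDomain

variable [MeasurableSpace E] [BorelSpace E]

theorem hasSum_setIntegral_fundamentalDomain {F : Type*} [NormedAddCommGroup F] [NormedSpace ℝ F]
    (b : Basis ι ℤ L) {g : E → F} (hg : Integrable g) :
    HasSum (fun x : L ↦ ∫ v in ZSpan.fundamentalDomain (b.ofZLatticeBasis ℝ L), g (v + x))
      (∫ v, g v) := by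
  have := Finite.finite_basis b
  have hF := ZLattice.isAddFundamentalDomain b (volume : Measure E)
  have : VAddInvariantMeasure L E volume :=
    inferInstanceAs (VAddInvariantMeasure L.toAddSubgroup E volume)
  rw [← hF.sum_restrict] at hg
  convert hasSum_integral_measure hg using 1
  · ext x
    rw [← Set.image_vadd, (measurePreserving_vadd x volume).setIntegral_image_emb
      (measurableEmbedding_const_vadd x)]
    simp [Submodule.vadd_def, add_comm]
  · rw [hF.sum_restrict]

theorem setIntegral_fundamentalDomain_tsum (b : Basis ι ℤ L) {g : E → ℂ} (hg : Integrable g) :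
    ∫ v in ZSpan.fundamentalDomain (b.ofZLatticeBasis ℝ L), ∑' x : L, g (v + x) = ∫ v, g v :=
  (hasSum_integral_of_summable_integral_norm (F := fun (x : L) v ↦ g (v + x))
    (fun x ↦ (hg.comp_add_right (x : E)).integrableOn)
    (hasSum_setIntegral_fundamentalDomain b hg.norm).summable).unique
    (hasSum_setIntegral_fundamentalDomain b hg)

theorem setIntegral_fundamentalDomain_exp_mul_periodization (b : Basis ι ℤ L) {f : C(E, ℂ)}
    (hint : Integrable f) (hf : LocallySummableTranslates L f) {y : E} (hy : y ∈ dualLattice L) :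
    ∫ v in ZSpan.fundamentalDomain (b.ofZLatticeBasis ℝ L),
        Complex.exp (2 * Real.pi * Complex.I * ⟪-y, v⟫) * periodization L f v =
      𝓕 (f : E → ℂ) y := by
  have hunfold (v : E) : Complex.exp (2 * Real.pi * Complex.I * ⟪-y, v⟫) * periodization L f v =
      ∑' x : L, Real.fourierChar (-⟪v + x, y⟫) • f (v + x) := by
    rw [periodization_apply hf, ← tsum_mul_left]
    refine tsum_congr fun x ↦ ?_
    obtain ⟨n, hn⟩ := mem_dualLattice.mp hy x x.2
    rw [Circle.smul_def, smul_eq_mul, Real.fourierChar_apply, inner_add_left, hn]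
    congr 1
    refine Complex.exp_eq_exp_iff_exists_int.mpr ⟨n, ?_⟩
    rw [inner_neg_left, real_inner_comm]
    push_cast
    ring
  simp_rw [hunfold]
  exact setIntegral_fundamentalDomain_tsum b
    ((Real.fourierIntegral_convergent_iff y).mpr hint)

end FundamentalDomain

variable [Fintype ι]

/-- The map `E → E / L ≃ (ℝ / ℤ)^ι` that takes the coordinates of a vector with respect to a
`ℤ`-basis of the lattice `L` modulo one. -/
def toTorus (b : Basis ι ℤ L) : C(E, UnitAddTorus ι) where
  toFun v := fun i ↦ ((b.ofZLatticeBasis ℝ L).equivFun v i : UnitAddCircle)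
  continuous_toFun := continuous_pi fun i ↦ (AddCircle.continuous_mk' 1).comp <|
    (continuous_apply i).comp (b.ofZLatticeBasis ℝ L).equivFunL.continuous

theorem isQuotientMap_toTorus (b : Basis ι ℤ L) : Topology.IsQuotientMap (toTorus b) :=
  (IsOpenQuotientMap.piMap fun _ : ι ↦
    (QuotientAddGroup.isOpenQuotientMap_mk :
      IsOpenQuotientMap (QuotientAddGroup.mk : ℝ → UnitAddCircle))).isQuotientMap.comp
    (b.ofZLatticeBasis ℝ L).equivFunL.toHomeomorph.isQuotientMap

theorem sub_mem_of_toTorus_eq (b : Basis ι ℤ L) {v w : E} (h : toTorus b v = toTorus b w) :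
    w - v ∈ L := by
  rw [← b.ofZLatticeBasis_span ℝ, Basis.mem_span_iff_repr_mem]
  intro i
  obtain ⟨n, hn⟩ := AddSubgroup.mem_zmultiples_iff.mp (QuotientAddGroup.eq.mp (congrFun h i))
  exact ⟨n, by simpa [sub_eq_neg_add] using hn⟩

theorem mFourier_toTorus (b : Basis ι ℤ L) {m : ι → ℤ} {y : E}
    (hy : ∀ v, ⟪y, v⟫ = ∑ i, m i * (b.ofZLatticeBasis ℝ L).repr v i) (v : E) :
    UnitAddTorus.mFourier m (toTorus b v) = Complex.exp (2 * Real.pi * Complex.I * ⟪y, v⟫) := by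
  simp only [UnitAddTorus.mFourier, toTorus, ContinuousMap.coe_mk, fourier_coe_apply,
    ← Complex.exp_sum]
  simp [hy, Finset.mul_sum, mul_assoc]

theorem factorsThrough_toTorus (b : Basis ι ℤ L) {f : C(E, ℂ)}
    (hf : LocallySummableTranslates L f) :
    Function.FactorsThrough (periodization L f) (toTorus b) := fun v w hvw ↦ by
  rw [← periodization_add_mem hf v (sub_mem_of_toTorus_eq b hvw), add_sub_cancel]

/-- The function on the torus `E / L ≃ (ℝ / ℤ)^ι` induced by the periodization of `f`. -/
def torusPeriodization (b : Basis ι ℤ L) {f : C(E, ℂ)} (hf : LocallySummableTranslates L f) :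
    C(UnitAddTorus ι, ℂ) :=
  (isQuotientMap_toTorus b).lift (periodization L f) (factorsThrough_toTorus b hf)

theorem torusPeriodization_toTorus (b : Basis ι ℤ L) {f : C(E, ℂ)}
    (hf : LocallySummableTranslates L f) (v : E) :
    torusPeriodization b hf (toTorus b v) = periodization L f v :=
  DFunLike.congr_fun
    ((isQuotientMap_toTorus b).lift_comp (periodization L f) (factorsThrough_toTorus b hf)) v

variable [MeasurableSpace E] [BorelSpace E]

theorem map_equivFun_volume (b : Basis ι ℤ L) :
    (volume : Measure E).map (b.ofZLatticeBasis ℝ L).equivFun =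
      ENNReal.ofReal (ZLattice.covolume L) • (volume : Measure (ι → ℝ)) := by
  ext s hs
  have hmeas : Measurable (b.ofZLatticeBasis ℝ L).equivFun :=
    (b.ofZLatticeBasis ℝ L).equivFunL.continuous.measurable
  have hcov : ENNReal.ofReal (ZLattice.covolume L) ≠ 0 := by
    simpa using ZLattice.covolume_pos L
  rw [Measure.map_apply hmeas hs, Measure.smul_apply, smul_eq_mul,
    ← Set.image_preimage_eq s (b.ofZLatticeBasis ℝ L).equivFun.surjective,
    ZLattice.volume_image_eq_volume_div_covolume' L b (hmeas hs).nullMeasurableSet,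
    ENNReal.mul_div_cancel hcov ENNReal.ofReal_ne_top,
    Set.image_preimage_eq s (b.ofZLatticeBasis ℝ L).equivFun.surjective]

theorem setIntegral_unitCube_comp_equivFun_symm (b : Basis ι ℤ L) (g : E → ℂ) :
    ∫ x in {x : ι → ℝ | ∀ i, x i ∈ Set.Ioc (0 : ℝ) (0 + 1)},
        g ((b.ofZLatticeBasis ℝ L).equivFun.symm x) =
      (ZLattice.covolume L : ℂ)⁻¹ *
        ∫ v in ZSpan.fundamentalDomain (b.ofZLatticeBasis ℝ L), g v := by
  set B := b.ofZLatticeBasis ℝ L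
  have hcube : {x : ι → ℝ | ∀ i, x i ∈ Set.Ioc (0 : ℝ) (0 + 1)} =ᵐ[volume]
      Set.univ.pi fun _ ↦ Set.Ico (0 : ℝ) 1 := by
    have hpi : {x : ι → ℝ | ∀ i, x i ∈ Set.Ioc (0 : ℝ) (0 + 1)} =
        Set.univ.pi fun _ ↦ Set.Ioc (0 : ℝ) 1 := by
      ext; simp [Set.mem_pi]
    rw [hpi]
    exact Measure.univ_pi_Ioc_ae_eq_Icc.trans Measure.univ_pi_Ico_ae_eq_Icc.symm
  have hpre : ZSpan.fundamentalDomain B = B.equivFun ⁻¹' Set.univ.pi fun _ ↦ Set.Ico (0 : ℝ) 1 := by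
    ext; simp [ZSpan.mem_fundamentalDomain, Set.mem_pi]
  have hmap : ∫ x in Set.univ.pi fun _ ↦ Set.Ico (0 : ℝ) 1, g (B.equivFun.symm x)
      ∂(volume : Measure E).map B.equivFun = ∫ v in ZSpan.fundamentalDomain B, g v := by
    have hemb : MeasurableEmbedding B.equivFun :=
      B.equivFunL.toHomeomorph.measurableEmbedding
    rw [hpre, hemb.setIntegral_map]
    simp only [LinearEquiv.symm_apply_apply]
  have hcov := ZLattice.covolume_pos L
  rw [setIntegral_congr_set hcube, ← hmap, map_equivFun_volume, Measure.restrict_smul,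
    integral_smul_measure, ENNReal.toReal_ofReal hcov.le, Complex.real_smul,
    inv_mul_cancel_left₀ (by exact_mod_cast hcov.ne')]

theorem mFourierCoeff_torusPeriodization (b : Basis ι ℤ L) {f : C(E, ℂ)} (hint : Integrable f)
    (hf : LocallySummableTranslates L f) {m : ι → ℤ} {y : E} (hyL : y ∈ dualLattice L)
    (hy : ∀ v, ⟪y, v⟫ = ∑ i, m i * (b.ofZLatticeBasis ℝ L).repr v i) :
    UnitAddTorus.mFourierCoeff (torusPeriodization b hf) m =
      (ZLattice.covolume L : ℂ)⁻¹ * 𝓕 (f : E → ℂ) y := by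
  have hneg (v : E) : ⟪-y, v⟫ = ∑ i, (-m) i * (b.ofZLatticeBasis ℝ L).repr v i := by
    simp [hy]
  rw [← setIntegral_fundamentalDomain_exp_mul_periodization b hint hf hyL,
    ← setIntegral_unitCube_comp_equivFun_symm, UnitAddTorus.mFourierCoeff_eq_integral _ _ 0]
  refine integral_congr_ae (.of_forall fun x ↦ ?_)
  have hx : (fun i ↦ (x i : UnitAddCircle)) =
      toTorus b ((b.ofZLatticeBasis ℝ L).equivFun.symm x) := by
    ext i
    exact congrArg _ (congrFun ((b.ofZLatticeBasis ℝ L).equivFun.apply_symm_apply x) i).symm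
  simp only [hx, mFourier_toTorus b hneg, torusPeriodization_toTorus, smul_eq_mul]

theorem poisson_summation_zlattice (L : Submodule ℤ E) [DiscreteTopology L] [IsZLattice ℝ L]
    {f : C(E, ℂ)} (hint : Integrable f) (hf : LocallySummableTranslates L f)
    (hfourier : Summable fun y : dualLattice L ↦ 𝓕 (f : E → ℂ) y) (u : E) :
    ∑' x : L, f (u + x) = (ZLattice.covolume L : ℂ)⁻¹ *
      ∑' y : dualLattice L,
        𝓕 (f : E → ℂ) y * Complex.exp (2 * Real.pi * Complex.I * ⟪(y : E), u⟫) := by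
  let b := Free.chooseBasis ℤ L
  obtain ⟨e, he⟩ := exists_equiv_dualLattice b
  have hcoeff (m) : UnitAddTorus.mFourierCoeff (torusPeriodization b hf) m =
      (ZLattice.covolume L : ℂ)⁻¹ * 𝓕 (f : E → ℂ) (e m) :=
    mFourierCoeff_torusPeriodization b hint hf (e m).2 (he m)
  have hsum : Summable (UnitAddTorus.mFourierCoeff (torusPeriodization b hf)) :=
    ((e.summable_iff.mpr hfourier).mul_left _).congr fun m ↦ (hcoeff m).symm
  have hseries := UnitAddTorus.hasSum_mFourier_series_apply_of_summable hsum (toTorus b u)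
  rw [← periodization_apply hf, ← torusPeriodization_toTorus b hf, ← hseries.tsum_eq,
    ← e.tsum_eq, ← tsum_mul_left]
  refine tsum_congr fun m ↦ ?_
  rw [hcoeff, mFourier_toTorus b (he m), smul_eq_mul, mul_assoc]

end PoissonSummation

section Gaussian

theorem re_tsum_ofReal_mul_exp {ι : Type*} {f : ι → ℝ} (hf : Summable f) (g : ι → ℝ) :
    (∑' i, (f i : ℂ) * Complex.exp (2 * Real.pi * Complex.I * g i)).re =
      ∑' i, f i * Real.cos (2 * Real.pi * g i) := by
  have hexp (i : ι) : Complex.exp (2 * Real.pi * Complex.I * g i) =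
      Complex.exp ((2 * Real.pi * g i : ℝ) * Complex.I) := by
    congr 1; push_cast; ring
  have hsum : Summable fun i ↦ (f i : ℂ) * Complex.exp (2 * Real.pi * Complex.I * g i) :=
    hf.abs.of_norm_bounded fun i ↦ by
      rw [norm_mul, Complex.norm_real, hexp, Complex.norm_exp_ofReal_mul_I, mul_one,
        Real.norm_eq_abs]
  rw [Complex.re_tsum hsum]
  refine tsum_congr fun i ↦ ?_
  rw [Complex.re_ofReal_mul, hexp, Complex.exp_ofReal_mul_I_re]

variable {E : Type*} [NormedAddCommGroup E]

/-- The Gaussian `v ↦ exp (-π a ‖v‖²)`, normalized so that its Fourier transform is a multiple of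
the Gaussian with parameter `a⁻¹`. -/
def gauss (a : ℝ) (v : E) : ℝ := Real.exp (-(Real.pi * a * ‖v‖ ^ 2))

theorem gauss_pos (a : ℝ) (v : E) : 0 < gauss a v := Real.exp_pos _

@[fun_prop]
theorem continuous_gauss (a : ℝ) : Continuous (gauss a : E → ℝ) := by
  unfold gauss
  fun_prop

theorem ofReal_gauss (a : ℝ) (v : E) :
    (gauss a v : ℂ) = Complex.exp (-(Real.pi * a : ℝ) * ‖v‖ ^ 2) := by
  simp [gauss]

theorem gauss_le_gauss {a b : ℝ} (hab : a ≤ b) (v : E) : gauss b v ≤ gauss a v := by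
  unfold gauss
  gcongr

theorem gauss_add_le {a : ℝ} (ha : 0 ≤ a) (u v : E) :
    gauss a (u + v) ≤ Real.exp (Real.pi * a * ‖u‖ ^ 2) * gauss (a / 2) v := by
  have htriangle : ‖v‖ ≤ ‖u + v‖ + ‖u‖ := by simpa using norm_sub_le (u + v) u
  have hsq : ‖v‖ ^ 2 ≤ 2 * (‖u + v‖ ^ 2 + ‖u‖ ^ 2) :=
    (pow_le_pow_left₀ (norm_nonneg v) htriangle 2).trans (add_sq_le)
  rw [gauss, gauss, ← Real.exp_add, Real.exp_le_exp]
  nlinarith [mul_le_mul_of_nonneg_left hsq (mul_nonneg Real.pi_pos.le ha)]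

theorem gauss_le_of_le_norm {a t r : ℝ} (ha : 0 ≤ a) (ht : 1 ≤ t) (hr : 0 ≤ r) {v : E}
    (hv : r ≤ ‖v‖) :
    gauss a v ≤ Real.exp (-(Real.pi * a * (1 - t⁻¹) * r ^ 2)) * gauss (a / t) v := by
  have ht' : 0 ≤ 1 - t⁻¹ := sub_nonneg.mpr (inv_le_one_of_one_le₀ ht)
  have : Real.pi * a * (1 - t⁻¹) * r ^ 2 ≤ Real.pi * a * (1 - t⁻¹) * ‖v‖ ^ 2 := by
    gcongr
  rw [gauss, gauss, ← Real.exp_add, Real.exp_le_exp, div_eq_mul_inv]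
  linarith

section Summability

variable [NormedSpace ℝ E] [FiniteDimensional ℝ E] (L : Submodule ℤ E) [DiscreteTopology L]
  {a : ℝ}

theorem summable_gauss (ha : 0 < a) : Summable fun x : L ↦ gauss a (x : E) := by
  set n := finrank ℤ L + 1
  have hbound := (ZLattice.summable_norm_pow_inv L (2 * n) (by omega)).mul_left
    (n.factorial / (Real.pi * a) ^ n)
  refine hbound.of_norm_bounded_eventually ?_
  filter_upwards [(Set.finite_singleton (0 : L)).compl_mem_cofinite] with x hx
  have : 0 < ‖x‖ := norm_pos_iff.mpr hx
  have hexp := Real.pow_div_factorial_le_exp (Real.pi * a * ‖x‖ ^ 2) (by positivity) n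
  rw [Real.norm_of_nonneg (gauss_pos _ _).le, gauss, Real.exp_neg, ← Submodule.coe_norm]
  refine (inv_anti₀ (by positivity) hexp).trans_eq ?_
  rw [inv_div, mul_pow, ← pow_mul, inv_pow, div_mul_eq_div_div, div_eq_mul_inv (_ / _)]

theorem summable_gauss_add (ha : 0 < a) (u : E) : Summable fun x : L ↦ gauss a (u + x) :=
  ((summable_gauss L (half_pos ha)).mul_left _).of_nonneg_of_le (fun _ ↦ (gauss_pos _ _).le)
    fun x ↦ gauss_add_le ha.le u x

end Summability

/-- The theta function `u ↦ ∑ x ∈ L, exp (-π a ‖u + x‖²)` of a lattice. -/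
def theta (L : Submodule ℤ E) (a : ℝ) (u : E) : ℝ := ∑' x : L, gauss a (u + x)

/-- The part of the series `theta L a u` coming from the points of `u + L` of norm at least `r`. -/
def thetaTail (L : Submodule ℤ E) (a : ℝ) (u : E) (r : ℝ) : ℝ :=
  ∑' x : L, {v : E | r ≤ ‖v‖}.indicator (gauss a) (u + x)

theorem thetaTail_eq_theta {L : Submodule ℤ E} (a : ℝ) {u : E} {r : ℝ}
    (hu : ∀ x ∈ L, r ≤ ‖u + x‖) : thetaTail L a u r = theta L a u :=
  tsum_congr fun x ↦ Set.indicator_of_mem (s := {v : E | r ≤ ‖v‖}) (hu x x.2) _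

variable [InnerProductSpace ℝ E]

/-- The cosine series `u ↦ ∑ y ∈ L, exp (-π a ‖y‖²) cos (2π ⟪y, u⟫)`; Poisson summation identifies
the theta function of a lattice with such a series over the dual lattice. -/
def cosTheta (L : Submodule ℤ E) (a : ℝ) (u : E) : ℝ :=
  ∑' y : L, gauss a (y : E) * Real.cos (2 * Real.pi * ⟪(y : E), u⟫)

theorem cosTheta_zero (L : Submodule ℤ E) (a : ℝ) : cosTheta L a 0 = theta L a 0 := by
  simp [cosTheta, theta]

variable [FiniteDimensional ℝ E] {a : ℝ}

theorem locallySummableTranslates_gauss (L : Submodule ℤ E) [DiscreteTopology L] (ha : 0 < a) :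
    LocallySummableTranslates L ⟨fun v ↦ (gauss a v : ℂ), by fun_prop⟩ := by
  intro K
  obtain ⟨R, hR⟩ := K.isCompact.isBounded.exists_norm_le
  refine ((summable_gauss L (half_pos ha)).mul_left
    (Real.exp (Real.pi * a * R ^ 2))).of_nonneg_of_le (fun _ ↦ norm_nonneg _) fun x ↦ ?_
  refine (ContinuousMap.norm_le _ (mul_pos (Real.exp_pos _) (gauss_pos _ _)).le).mpr fun v ↦ ?_
  have hv : ‖(v : E)‖ ≤ R := hR v v.2
  calc ‖(gauss a (v + x : E) : ℂ)‖ = gauss a (v + x : E) := by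
        rw [Complex.norm_real, Real.norm_of_nonneg (gauss_pos _ _).le]
    _ ≤ Real.exp (Real.pi * a * ‖(v : E)‖ ^ 2) * gauss (a / 2) (x : E) := gauss_add_le ha.le _ _
    _ ≤ Real.exp (Real.pi * a * R ^ 2) * gauss (a / 2) (x : E) := by
        gcongr
        exact (gauss_pos _ _).le

section FourierTransform

variable [MeasurableSpace E] [BorelSpace E]

theorem integrable_gauss (ha : 0 < a) : Integrable fun v : E ↦ (gauss a v : ℂ) := by
  have hre : 0 < ((Real.pi * a : ℝ) : ℂ).re := by
    rw [Complex.ofReal_re]; positivity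
  simpa [ofReal_gauss] using GaussianFourier.integrable_cexp_neg_mul_sq_norm_add hre 0 (0 : E)

theorem fourier_gauss (ha : 0 < a) (w : E) :
    𝓕 (fun v : E ↦ (gauss a v : ℂ)) w = (a⁻¹ ^ (finrank ℝ E / 2 : ℝ) * gauss a⁻¹ w : ℝ) := by
  have hre : 0 < ((Real.pi * a : ℝ) : ℂ).re := by
    rw [Complex.ofReal_re]; positivity
  have hscale : (Real.pi / (Real.pi * a : ℝ) : ℂ) = (a⁻¹ : ℝ) := by
    push_cast
    field_simp
  simp_rw [ofReal_gauss]
  rw [fourier_gaussian_innerProductSpace hre, hscale, Complex.ofReal_mul (_ ^ _), ofReal_gauss,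
    Complex.ofReal_cpow (by positivity)]
  congr 2
  · push_cast; rfl
  · push_cast; field_simp

end FourierTransform

variable (L : Submodule ℤ E) [DiscreteTopology L]

theorem summable_gauss_mul_cos (ha : 0 < a) (u : E) :
    Summable fun y : L ↦ gauss a (y : E) * Real.cos (2 * Real.pi * ⟪(y : E), u⟫) :=
  (summable_gauss L ha).of_norm_bounded fun y ↦ by
    rw [norm_mul, Real.norm_of_nonneg (gauss_pos _ _).le]
    exact mul_le_of_le_one_right (gauss_pos _ _).le (Real.abs_cos_le_one _)

theorem summable_indicator_gauss (ha : 0 < a) (u : E) (s : Set E) :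
    Summable fun x : L ↦ s.indicator (gauss a) (u + x) :=
  (summable_gauss_add L ha u).of_nonneg_of_le
    (fun _ ↦ Set.indicator_nonneg (fun v _ ↦ (gauss_pos a v).le) _)
    fun _ ↦ Set.indicator_le_self' (fun v _ ↦ (gauss_pos a v).le) _

theorem theta_zero_pos (ha : 0 < a) : 0 < theta L a 0 :=
  (summable_gauss_add L ha 0).tsum_pos (fun _ ↦ (gauss_pos _ _).le) 0 (gauss_pos _ _)

theorem cosTheta_le_theta_zero (ha : 0 < a) (u : E) : cosTheta L a u ≤ theta L a 0 := by
  simpa only [theta, cosTheta, zero_add] using (summable_gauss_mul_cos L ha u).tsum_le_tsum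
    (fun y ↦ mul_le_of_le_one_right (gauss_pos _ _).le (Real.cos_le_one _)) (summable_gauss L ha)

theorem theta_zero_anti {b : ℝ} (ha : 0 < a) (hab : a ≤ b) : theta L b 0 ≤ theta L a 0 :=
  (summable_gauss_add L (ha.trans_le hab) 0).tsum_le_tsum (fun _ ↦ gauss_le_gauss hab _)
    (summable_gauss_add L ha 0)

theorem theta_zero_sub_le_cosTheta (ha : 0 < a) {u : E} {r : ℝ}
    (hu : ∀ y ∈ L, ‖y‖ < r → Real.cos (2 * Real.pi * ⟪y, u⟫) = 1) :
    theta L a 0 - 2 * thetaTail L a 0 r ≤ cosTheta L a u := by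
  have htail := summable_indicator_gauss L ha 0 {v | r ≤ ‖v‖}
  have htheta := summable_gauss_add L ha 0
  rw [theta, thetaTail, cosTheta, ← tsum_mul_left, ← htheta.tsum_sub (htail.mul_left 2)]
  refine (htheta.sub (htail.mul_left 2)).tsum_le_tsum (fun y ↦ ?_) (summable_gauss_mul_cos L ha u)
  have hpos := gauss_pos a (y : E)
  by_cases hy : (y : E) ∈ {v : E | r ≤ ‖v‖}
  · rw [zero_add, Set.indicator_of_mem hy]
    nlinarith [Real.neg_one_le_cos (2 * Real.pi * ⟪(y : E), u⟫)]
  · rw [zero_add, Set.indicator_of_notMem hy, hu y y.2 (not_le.mp hy)]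
    simp

theorem one_sub_mul_thetaTail_add_le (ha : 0 < a) {t r : ℝ} (ht : 1 ≤ t) (hr : 0 ≤ r) (u : E) :
    (1 - Real.exp (-(Real.pi * a * (1 - t⁻¹) * r ^ 2))) * thetaTail L a u r +
        Real.exp (-(Real.pi * a * (1 - t⁻¹) * r ^ 2)) * theta L a u ≤
      Real.exp (-(Real.pi * a * (1 - t⁻¹) * r ^ 2)) * theta L (a / t) u := by
  set ε := Real.exp (-(Real.pi * a * (1 - t⁻¹) * r ^ 2))
  have htail := (summable_indicator_gauss L ha u {v | r ≤ ‖v‖}).mul_left (1 - ε)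
  have htheta := (summable_gauss_add L ha u).mul_left ε
  have hscaled := (summable_gauss_add L (div_pos ha (zero_lt_one.trans_le ht)) u).mul_left ε
  rw [theta, thetaTail, theta, ← tsum_mul_left, ← tsum_mul_left, ← tsum_mul_left,
    ← htail.tsum_add htheta]
  refine (htail.add htheta).tsum_le_tsum (fun x ↦ ?_) hscaled
  by_cases hx : u + x ∈ {v : E | r ≤ ‖v‖}
  · rw [Set.indicator_of_mem hx]
    linarith [gauss_le_of_le_norm ha.le ht hr hx]
  · rw [Set.indicator_of_notMem hx, mul_zero, zero_add]
    gcongr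
    exact gauss_le_gauss (div_le_self ha.le ht) _

variable [IsZLattice ℝ L] [MeasurableSpace E] [BorelSpace E]

theorem theta_eq_cosTheta (ha : 0 < a) (u : E) :
    theta L a u = (ZLattice.covolume L)⁻¹ * a⁻¹ ^ (finrank ℝ E / 2 : ℝ) *
      cosTheta (dualLattice L) a⁻¹ u := by
  have hsum : Summable fun y : dualLattice L ↦ a⁻¹ ^ (finrank ℝ E / 2 : ℝ) * gauss a⁻¹ (y : E) :=
    (summable_gauss (dualLattice L) (inv_pos.mpr ha)).mul_left _
  have hpoisson := poisson_summation_zlattice L (integrable_gauss ha)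
    (locallySummableTranslates_gauss L ha) (f := ⟨fun v ↦ (gauss a v : ℂ), by fun_prop⟩)
    ((Complex.ofRealCLM.summable hsum).congr fun y ↦ (fourier_gauss ha (y : E)).symm) u
  simp only [ContinuousMap.coe_mk, fourier_gauss ha] at hpoisson
  have hre := congrArg Complex.re hpoisson
  rw [← Complex.ofReal_tsum, Complex.ofReal_re, ← Complex.ofReal_inv, Complex.re_ofReal_mul,
    re_tsum_ofReal_mul_exp hsum] at hre
  simp only [theta, cosTheta, hre, mul_assoc, tsum_mul_left]

theorem theta_div_le (ha : 0 < a) {t : ℝ} (ht : 1 ≤ t) (u : E) :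
    theta L (a / t) u ≤ t ^ (finrank ℝ E / 2 : ℝ) * theta L a 0 := by
  have ht0 : 0 < t := zero_lt_one.trans_le ht
  have hinv : a⁻¹ ≤ (a / t)⁻¹ := by
    gcongr
    exact div_le_self ha.le ht
  have hcov := ZLattice.covolume_pos L
  have hpow : (a / t)⁻¹ ^ (finrank ℝ E / 2 : ℝ) =
      t ^ (finrank ℝ E / 2 : ℝ) * a⁻¹ ^ (finrank ℝ E / 2 : ℝ) := by
    rw [inv_div, div_eq_mul_inv, Real.mul_rpow ht0.le (by positivity)]
  calc theta L (a / t) u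
      = (ZLattice.covolume L)⁻¹ * (a / t)⁻¹ ^ (finrank ℝ E / 2 : ℝ) *
          cosTheta (dualLattice L) (a / t)⁻¹ u := theta_eq_cosTheta L (div_pos ha ht0) u
    _ ≤ (ZLattice.covolume L)⁻¹ * (a / t)⁻¹ ^ (finrank ℝ E / 2 : ℝ) *
          theta (dualLattice L) a⁻¹ 0 := by
        gcongr
        exact (cosTheta_le_theta_zero _ (by positivity) u).trans
          (theta_zero_anti _ (by positivity) hinv)
    _ = t ^ (finrank ℝ E / 2 : ℝ) * theta L a 0 := by
        rw [theta_eq_cosTheta L ha, cosTheta_zero, hpow]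
        ring

/-- Banaszczyk's tail estimate, in a form that keeps the slack from the points of norm less
than `r`. -/
theorem thetaTail_le (ha : 0 < a) {t r : ℝ} (ht : 1 ≤ t) (hr : 0 ≤ r) (u : E) :
    (1 - Real.exp (-(Real.pi * a * (1 - t⁻¹) * r ^ 2))) * thetaTail L a u r +
        Real.exp (-(Real.pi * a * (1 - t⁻¹) * r ^ 2)) * theta L a u ≤
      Real.exp (-(Real.pi * a * (1 - t⁻¹) * r ^ 2)) *
        (t ^ (finrank ℝ E / 2 : ℝ) * theta L a 0) :=
  (one_sub_mul_thetaTail_add_le L ha ht hr u).trans <|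
    mul_le_mul_of_nonneg_left (theta_div_le L ha ht u) (Real.exp_pos _).le

end Gaussian

section Transference

theorem exp_one_sub_pi_lt : Real.exp (1 - Real.pi) < 5 / 42 := by
  have hsq : (7.38 : ℝ) < Real.exp 1 * Real.exp 1 := by nlinarith [Real.exp_one_gt_d9]
  have hlower : (42 / 5 : ℝ) < Real.exp (Real.pi - 1) :=
    calc (42 / 5 : ℝ) < 7.38 * (0.14 + 1) := by norm_num
      _ ≤ Real.exp 1 * Real.exp 1 * Real.exp 0.14 := by
        gcongr
        exact Real.add_one_le_exp _
      _ = Real.exp 2.14 := by rw [← Real.exp_add, ← Real.exp_add]; norm_num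
      _ ≤ Real.exp (Real.pi - 1) := Real.exp_le_exp.mpr (by linarith [Real.pi_gt_d2])
  rw [← neg_sub, Real.exp_neg, ← inv_div]
  exact inv_strictAnti₀ (by norm_num) hlower

theorem pi_mul_exp_one_sub_pi_le : Real.pi * Real.exp (1 - Real.pi) ≤ 2 / 5 := by
  nlinarith [exp_one_sub_pi_lt, Real.exp_pos (1 - Real.pi), Real.pi_lt_d4, Real.pi_pos]

theorem three_mul_pi_mul_exp_lt :
    3 * (Real.pi * Real.exp (1 - Real.pi)) <
      1 + Real.exp (1 - Real.pi) + Real.exp (1 - Real.pi) * (Real.pi * Real.exp (1 - Real.pi)) := by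
  have hε := exp_one_sub_pi_lt
  have hε0 := Real.exp_pos (1 - Real.pi)
  set ε := Real.exp (1 - Real.pi)
  nlinarith [Real.pi_lt_d4, mul_pos hε0 (by linarith : 0 < 3 - ε)]

theorem sq_rpow_pi_mul_exp (n : ℕ) :
    (Real.pi ^ (n / 2 : ℝ) * Real.exp (-((Real.pi - 1) * (n / 2)))) ^ 2 =
      (Real.pi * Real.exp (1 - Real.pi)) ^ n := by
  rw [mul_pow, mul_pow, ← Real.exp_nat_mul, ← Real.exp_nat_mul,
    ← Real.rpow_mul_natCast Real.pi_pos.le, ← Real.rpow_natCast]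
  congr 2 <;> push_cast <;> ring

theorem three_mul_rpow_pi_mul_exp_lt {n : ℕ} (hn : 2 ≤ n) :
    3 * (Real.pi ^ (n / 2 : ℝ) * Real.exp (-((Real.pi - 1) * (n / 2)))) <
      1 + Real.exp (-((Real.pi - 1) * (n / 2))) + Real.exp (-((Real.pi - 1) * (n / 2))) *
        (Real.pi ^ (n / 2 : ℝ) * Real.exp (-((Real.pi - 1) * (n / 2)))) := by
  rcases hn.eq_or_lt with rfl | hn
  · simpa using three_mul_pi_mul_exp_lt
  · have hsq := sq_rpow_pi_mul_exp n
    set ε := Real.exp (-((Real.pi - 1) * (n / 2)))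
    set γ := Real.pi ^ (n / 2 : ℝ) * ε
    have hε : 0 < ε := Real.exp_pos _
    have hγ : 0 < γ := by positivity
    have hγsq : γ ^ 2 ≤ (2 / 5) ^ 3 :=
      calc γ ^ 2 = (Real.pi * Real.exp (1 - Real.pi)) ^ n := hsq
        _ ≤ (2 / 5) ^ n := by gcongr; exact pi_mul_exp_one_sub_pi_le
        _ ≤ (2 / 5) ^ 3 := pow_le_pow_of_le_one (by norm_num) (by norm_num) hn
    have hγlt : γ < 1 / 3 := lt_of_pow_lt_pow_left₀ 2 (by norm_num) (hγsq.trans_lt (by norm_num))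
    nlinarith [mul_pos hε hγ]

variable {E : Type*} [NormedAddCommGroup E] [InnerProductSpace ℝ E] [FiniteDimensional ℝ E]
  (L : Submodule ℤ E) [DiscreteTopology L] [IsZLattice ℝ L]

theorem theta_mul_theta_dualLattice [MeasurableSpace E] [BorelSpace E] {a : ℝ} (ha : 0 < a)
    (u : E) : theta L a u * theta (dualLattice L) a⁻¹ 0 =
      theta L a 0 * cosTheta (dualLattice L) a⁻¹ u := by
  rw [theta_eq_cosTheta L ha u, theta_eq_cosTheta L ha 0, cosTheta_zero]
  ring

variable {L}

theorem cosTheta_dualLattice_le [MeasurableSpace E] [BorelSpace E] {a t r : ℝ} (ha : 0 < a)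
    (ht : 1 ≤ t) (hr : 0 ≤ r) {u : E} (hu : ∀ x ∈ L, r ≤ ‖u + x‖) :
    cosTheta (dualLattice L) a⁻¹ u ≤ t ^ (finrank ℝ E / 2 : ℝ) *
      Real.exp (-(Real.pi * a * (1 - t⁻¹) * r ^ 2)) * theta (dualLattice L) a⁻¹ 0 := by
  have htail := thetaTail_le L ha ht hr u
  rw [thetaTail_eq_theta a hu] at htail
  refine le_of_mul_le_mul_left ?_ (theta_zero_pos L ha)
  rw [← theta_mul_theta_dualLattice L ha u]
  nlinarith [theta_zero_pos (dualLattice L) (inv_pos.mpr ha)]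

-- The choice `a = r₂ / r₁` makes both Gaussian tails decay at the rate `exp (-(π - 1) n / 2)`; the
-- scaling `t = π` makes `t ^ (n / 2)` times this rate small enough already for `n = 2`.
theorem exists_mem_dualLattice_cos_ne_one (hn : 2 ≤ finrank ℝ E) {r₁ r₂ : ℝ} (hr₁ : 0 < r₁)
    (hr₂ : 0 < r₂) (hr : r₁ * r₂ = finrank ℝ E / 2) {u : E} (hu : ∀ x ∈ L, r₁ ≤ ‖u + x‖) :
    ∃ y ∈ dualLattice L, ‖y‖ < r₂ ∧ Real.cos (2 * Real.pi * ⟪y, u⟫) ≠ 1 := by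
  borelize E
  by_contra! hcos
  set a := r₂ / r₁ with ha_def
  have ha : 0 < a := div_pos hr₂ hr₁
  have hpi : 1 < Real.pi := by linarith [Real.pi_gt_three]
  have hrate₁ : Real.pi * a * (1 - Real.pi⁻¹) * r₁ ^ 2 = (Real.pi - 1) * (finrank ℝ E / 2) := by
    rw [← hr, ha_def]; field_simp
  have hrate₂ : Real.pi * a⁻¹ * (1 - Real.pi⁻¹) * r₂ ^ 2 = (Real.pi - 1) * (finrank ℝ E / 2) := by
    rw [← hr, ha_def]; field_simp
  have hupper := cosTheta_dualLattice_le ha hpi.le hr₁.le hu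
  have hlower := theta_zero_sub_le_cosTheta (dualLattice L) (inv_pos.mpr ha) hcos
  have htail := thetaTail_le (dualLattice L) (inv_pos.mpr ha) hpi.le hr₂.le 0
  have hnum := three_mul_rpow_pi_mul_exp_lt hn
  have hθ := theta_zero_pos (dualLattice L) (inv_pos.mpr ha)
  rw [hrate₁] at hupper
  rw [hrate₂] at htail
  have hε : Real.exp (-((Real.pi - 1) * (finrank ℝ E / 2))) < 1 := by
    rw [Real.exp_lt_one_iff, neg_lt_zero, ← hr]
    exact mul_pos (sub_pos.mpr hpi) (mul_pos hr₁ hr₂)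
  set ε := Real.exp (-((Real.pi - 1) * (finrank ℝ E / 2)))
  set γ := Real.pi ^ (finrank ℝ E / 2 : ℝ) * ε
  set θ := theta (dualLattice L) a⁻¹ 0
  set τ := thetaTail (dualLattice L) a⁻¹ 0 r₂
  have hτ : (1 - ε) * τ ≤ (γ - ε) * θ := by linarith
  have hcombine : (1 - ε) * (θ - 2 * τ) ≤ (1 - ε) * (γ * θ) :=
    mul_le_mul_of_nonneg_left (hlower.trans hupper) (sub_nonneg.mpr hε.le)
  have hcontra : 0 < (1 + ε + ε * γ - 3 * γ) * θ := mul_pos (sub_pos.mpr hnum) hθ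
  linarith [hτ, hcombine, hcontra]

end Transference

section Rounding

variable {E : Type*} [NormedAddCommGroup E] [InnerProductSpace ℝ E]

-- The average of `‖e + (c - k) • b‖²` over `k = ⌊c⌋, ⌊c⌋ + 1` with weights `1 - fract c, fract c`
-- is `‖e‖² + fract c * (1 - fract c) * ‖b‖²`.
theorem exists_int_norm_add_smul_sq_le (e b : E) (c : ℝ) :
    ∃ k : ℤ, ‖e + (c - k) • b‖ ^ 2 ≤ ‖e‖ ^ 2 + ‖b‖ ^ 2 / 4 := by
  by_contra! h
  have hfloor := h ⌊c⌋
  have hsucc := h (⌊c⌋ + 1)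
  have hsub : c - ((⌊c⌋ + 1 : ℤ) : ℝ) = Int.fract c - 1 := by
    rw [Int.fract]; push_cast; ring
  rw [hsub] at hsucc
  change _ < ‖e + Int.fract c • b‖ ^ 2 at hfloor
  set f := Int.fract c
  have hf₀ : 0 ≤ f := Int.fract_nonneg c
  have hf₁ : 0 < 1 - f := sub_pos.mpr (Int.fract_lt_one c)
  have haverage : (1 - f) * ‖e + f • b‖ ^ 2 + f * ‖e + (f - 1) • b‖ ^ 2 =
      ‖e‖ ^ 2 + f * (1 - f) * ‖b‖ ^ 2 := by
    simp only [norm_add_sq_real, norm_smul, mul_pow, Real.norm_eq_abs, sq_abs, inner_smul_right]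
    ring
  have hquarter : f * (1 - f) * ‖b‖ ^ 2 ≤ ‖b‖ ^ 2 / 4 := by
    nlinarith [mul_nonneg (sq_nonneg (f - 1 / 2)) (sq_nonneg ‖b‖)]
  nlinarith [mul_lt_mul_of_pos_left hfloor hf₁, mul_le_mul_of_nonneg_left hsucc.le hf₀]

theorem exists_int_norm_sum_sub_smul_sq_le {ι : Type*} (s : Finset ι) (b : ι → E) (c : ι → ℝ) :
    ∃ k : ι → ℤ, ‖∑ i ∈ s, (c i - k i) • b i‖ ^ 2 ≤ (∑ i ∈ s, ‖b i‖ ^ 2) / 4 := by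
  classical
  induction s using Finset.induction_on with
  | empty => exact ⟨0, by simp⟩
  | insert i s his ih =>
    obtain ⟨k, hk⟩ := ih
    obtain ⟨n, hn⟩ := exists_int_norm_add_smul_sq_le (∑ j ∈ s, (c j - k j) • b j) (b i) (c i)
    refine ⟨Function.update k i n, ?_⟩
    have hupdate : ∑ j ∈ s, (c j - (Function.update k i n j : ℤ)) • b j =
        ∑ j ∈ s, (c j - k j) • b j :=
      Finset.sum_congr rfl fun j hj ↦ by rw [Function.update_of_ne (ne_of_mem_of_not_mem hj his)]
    rw [Finset.sum_insert his, Finset.sum_insert his, Function.update_self, hupdate, add_comm]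
    linarith

theorem exists_mem_dist_le_of_span_eq_top [FiniteDimensional ℝ E] (L : Submodule ℤ E) {r : ℝ}
    (hr : 0 ≤ r) (hL : span ℝ ((L : Set E) ∩ Metric.closedBall 0 r) = ⊤) (x : E) :
    ∃ y ∈ L, dist x y ≤ √(finrank ℝ E) / 2 * r := by
  let b := Basis.ofSpan hL.ge
  have hb (i) : b i ∈ (L : Set E) ∩ Metric.closedBall 0 r := Basis.ofSpan_subset hL.ge ⟨i, rfl⟩
  have := FiniteDimensional.fintypeBasisIndex b
  obtain ⟨k, hk⟩ := exists_int_norm_sum_sub_smul_sq_le Finset.univ b (b.repr x)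
  refine ⟨∑ i, k i • b i, sum_mem fun i _ ↦ zsmul_mem (hb i).1 _, ?_⟩
  have hsub : ∑ i, (b.repr x i - k i) • b i = x - ∑ i, k i • b i := by
    simp only [sub_smul, Finset.sum_sub_distrib, b.sum_repr, Int.cast_smul_eq_zsmul]
  have hsum : ∑ i, ‖b i‖ ^ 2 ≤ finrank ℝ E * r ^ 2 := by
    rw [finrank_eq_card_basis b, ← Finset.card_univ, ← nsmul_eq_mul]
    refine Finset.sum_le_card_nsmul _ _ _ fun i _ ↦ ?_
    gcongr
    exact mem_closedBall_zero_iff.mp (hb i).2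
  rw [dist_eq_norm, ← hsub]
  refine le_of_sq_le_sq ?_ (by positivity)
  rw [mul_pow, div_pow, Real.sq_sqrt (Nat.cast_nonneg _)]
  linarith

end Rounding

section Chain

variable {E : Type*} [NormedAddCommGroup E] [InnerProductSpace ℝ E]

theorem eq_top_of_forall_exists_dist_le [FiniteDimensional ℝ E] (V : Submodule ℝ E) {t : ℝ}
    (hV : ∀ x, ∃ y ∈ V, dist x y ≤ t) : V = ⊤ := by
  rw [← orthogonal_eq_bot_iff, eq_bot_iff]
  intro w hw
  by_contra hw0
  have hw0 : 0 < ‖w‖ := norm_pos_iff.mpr hw0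
  have ht : 0 ≤ t := dist_nonneg.trans (hV 0).choose_spec.2
  set z := ((t + 1) / ‖w‖) • w
  have hz : ‖z‖ = t + 1 := by
    rw [norm_smul, Real.norm_of_nonneg (by positivity), div_mul_cancel₀ _ hw0.ne']
  obtain ⟨y, hy, hzy⟩ := hV z
  have hinner : ⟪z, y⟫ = 0 := inner_left_of_mem_orthogonal hy (Vᗮ.smul_mem _ hw)
  have hpythagoras := norm_sub_sq_real z y
  rw [hinner, ← dist_eq_norm, hz] at hpythagoras
  nlinarith [sq_nonneg ‖y‖, dist_nonneg (x := z) (y := y)]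

-- Walk from `0` to `x` in steps of length at most `r - 2 * t`: the lattice points chosen near
-- consecutive points of the walk differ by a lattice vector of norm at most `r`.
theorem exists_mem_span_dist_le (L : Submodule ℤ E) {t r : ℝ} (htr : 2 * t < r)
    (hL : ∀ x : E, ∃ y ∈ L, dist x y ≤ t) (x : E) :
    ∃ y ∈ span ℝ ((L : Set E) ∩ Metric.closedBall 0 r), dist x y ≤ t := by
  set V := span ℝ ((L : Set E) ∩ Metric.closedBall 0 r)
  have ht : 0 ≤ t := dist_nonneg.trans (hL 0).choose_spec.2
  have hstep (w : E) (hw : ‖w‖ ≤ r - 2 * t) (n : ℕ) : ∃ y ∈ L, y ∈ V ∧ dist (n • w) y ≤ t := by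
    induction n with
    | zero => exact ⟨0, L.zero_mem, V.zero_mem, by simpa using ht⟩
    | succ n ih =>
      obtain ⟨y, hyL, hyV, hy⟩ := ih
      obtain ⟨z, hzL, hz⟩ := hL ((n + 1) • w)
      have hnorm : ‖z - y‖ ≤ r := by
        have hw' : dist ((n + 1) • w) (n • w) ≤ r - 2 * t := by
          rwa [dist_eq_norm, succ_nsmul, add_sub_cancel_left]
        rw [← dist_eq_norm]
        linarith [dist_triangle4 z ((n + 1) • w) (n • w) y, dist_comm z ((n + 1) • w)]
      have hsub : z - y ∈ V :=
        subset_span ⟨L.sub_mem hzL hyL, mem_closedBall_zero_iff.mpr hnorm⟩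
      exact ⟨z, hzL, by simpa using V.add_mem hsub hyV, hz⟩
  obtain ⟨n, hn⟩ := exists_nat_gt (‖x‖ / (r - 2 * t))
  have hn₀ : (0 : ℝ) < n := (div_nonneg (norm_nonneg x) (sub_pos.mpr htr).le).trans_lt hn
  have hw : ‖(n : ℝ)⁻¹ • x‖ ≤ r - 2 * t := by
    rw [norm_smul, norm_inv, Real.norm_natCast, inv_mul_le_iff₀ hn₀]
    exact ((div_lt_iff₀ (sub_pos.mpr htr)).mp hn).le
  obtain ⟨y, -, hyV, hy⟩ := hstep _ hw n
  refine ⟨y, hyV, ?_⟩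
  rwa [← Nat.cast_smul_eq_nsmul ℝ, smul_inv_smul₀ hn₀.ne'] at hy

end Chain

section SuccessiveMinima

variable {d : ℕ} {Λ Γ : Set (Euc d)} {r : ℝ}

theorem le_finrank_iff_eq_top {V : Submodule ℝ (Euc d)} : d ≤ finrank ℝ V ↔ V = ⊤ := by
  refine ⟨fun h ↦ eq_top_of_finrank_eq (le_antisymm V.finrank_le ?_), ?_⟩
  · rwa [finrank_euclideanSpace_fin]
  · rintro rfl
    rw [finrank_top, finrank_euclideanSpace_fin]

theorem one_le_finrank_span_inter_closedBall_iff :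
    1 ≤ finrank ℝ (span ℝ (Λ ∩ Metric.closedBall 0 r)) ↔ ∃ x ∈ Λ, x ≠ 0 ∧ ‖x‖ ≤ r := by
  rw [one_le_finrank_iff, Ne, span_eq_bot]
  simp [and_comm]

theorem succMin_nonneg (Λ : Set (Euc d)) (j : ℕ) : 0 ≤ succMin Λ j :=
  Real.sInf_nonneg fun _ hr ↦ hr.1.le

theorem succMin_le {j : ℕ} (hr : 0 < r)
    (hj : j ≤ finrank ℝ (span ℝ (Λ ∩ Metric.closedBall 0 r))) : succMin Λ j ≤ r :=
  csInf_le ⟨0, fun _ hs ↦ hs.1.le⟩ ⟨hr, hj⟩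

theorem succMin_one_le_norm {x : Euc d} (hx : x ∈ Λ) (hx0 : x ≠ 0) : succMin Λ 1 ≤ ‖x‖ :=
  succMin_le (norm_pos_iff.mpr hx0)
    (one_le_finrank_span_inter_closedBall_iff.mpr ⟨x, hx, hx0, le_rfl⟩)

theorem exists_norm_lt_of_succMin_one_lt (hΛ : ∃ x ∈ Λ, x ≠ 0) (hr : succMin Λ 1 < r) :
    ∃ x ∈ Λ, x ≠ 0 ∧ ‖x‖ < r := by
  obtain ⟨x, hx, hx0⟩ := hΛ
  obtain ⟨s, ⟨-, hs⟩, hsr⟩ := exists_lt_of_csInf_lt (by exact ⟨‖x‖, norm_pos_iff.mpr hx0,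
    one_le_finrank_span_inter_closedBall_iff.mpr ⟨x, hx, hx0, le_rfl⟩⟩) hr
  obtain ⟨y, hy, hy0, hys⟩ := one_le_finrank_span_inter_closedBall_iff.mp hs
  exact ⟨y, hy, hy0, hys.trans_lt hsr⟩

theorem exists_span_inter_closedBall_eq_top (hΛ : span ℝ Λ = ⊤) :
    ∃ r > 0, span ℝ (Λ ∩ Metric.closedBall 0 r) = ⊤ := by
  let b := Basis.ofSpan hΛ.ge
  have := FiniteDimensional.fintypeBasisIndex b
  obtain ⟨r, hr0, hr⟩ := (Set.finite_range b).isBounded.exists_pos_norm_le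
  refine ⟨r, hr0, top_le_iff.mp (b.span_eq.ge.trans (span_mono fun y hy ↦ ?_))⟩
  exact ⟨Basis.ofSpan_subset hΛ.ge hy, mem_closedBall_zero_iff.mpr (hr y hy)⟩

theorem span_inter_closedBall_eq_top_of_succMin_lt (hΛ : span ℝ Λ = ⊤) (hr : succMin Λ d < r) :
    span ℝ (Λ ∩ Metric.closedBall 0 r) = ⊤ := by
  obtain ⟨s, hs0, hs⟩ := exists_span_inter_closedBall_eq_top hΛ
  obtain ⟨t, ⟨-, ht⟩, htr⟩ :=
    exists_lt_of_csInf_lt (by exact ⟨s, hs0, le_finrank_iff_eq_top.mpr hs⟩) hr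
  refine top_le_iff.mp ((le_finrank_iff_eq_top.mp ht).ge.trans (span_mono ?_))
  exact Set.inter_subset_inter_right _ (Metric.closedBall_subset_closedBall htr.le)

theorem sepRad_eq_succMin_one_div_two (hΛ : ∃ x ∈ Λ, x ≠ 0) : sepRad Λ = succMin Λ 1 / 2 := by
  have hmin : sInf (norm '' (Λ \ {0})) = succMin Λ 1 := by
    apply le_antisymm
    · refine le_of_forall_gt fun r hr ↦ ?_
      obtain ⟨x, hx, hx0, hxr⟩ := exists_norm_lt_of_succMin_one_lt hΛ hr
      have hbdd : BddBelow (norm '' (Λ \ {0})) :=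
        ⟨0, Set.forall_mem_image.mpr fun y _ ↦ norm_nonneg y⟩
      exact (csInf_le hbdd ⟨x, ⟨hx, hx0⟩, rfl⟩).trans_lt hxr
    · obtain ⟨x, hx, hx0⟩ := hΛ
      refine le_csInf ⟨_, x, ⟨hx, hx0⟩, rfl⟩ (Set.forall_mem_image.mpr fun y hy ↦ ?_)
      exact succMin_one_le_norm hy.1 hy.2
  rw [sepRad, hmin]
  ring

theorem exists_inner_ne_zero_of_span_eq_top {E : Type*} [NormedAddCommGroup E]
    [InnerProductSpace ℝ E] {s : Set E} (hs : span ℝ s = ⊤) {x : E} (hx : x ≠ 0) :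
    ∃ y ∈ s, ⟪x, y⟫ ≠ 0 := by
  by_contra! h
  have hle : span ℝ s ≤ (ℝ ∙ x)ᗮ :=
    span_le.mpr fun y hy ↦ mem_orthogonal_singleton_iff_inner_right.mpr (h y hy)
  rw [hs] at hle
  exact hx (inner_self_eq_zero.mp (mem_orthogonal_singleton_iff_inner_right.mp (hle mem_top)))

theorem one_le_succMin_one_mul_succMin (hΛ : ∃ x ∈ Λ, x ≠ 0) (hΓ : span ℝ Γ = ⊤)
    (hΛΓ : ∀ x ∈ Λ, ∀ y ∈ Γ, ∃ n : ℤ, ⟪x, y⟫ = n) : 1 ≤ succMin Λ 1 * succMin Γ d := by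
  refine le_mul_of_forall_lt₀ fun r hr s hs ↦ ?_
  obtain ⟨x, hx, hx0, hxr⟩ := exists_norm_lt_of_succMin_one_lt hΛ hr
  obtain ⟨y, ⟨hy, hys⟩, hxy⟩ := exists_inner_ne_zero_of_span_eq_top
    (span_inter_closedBall_eq_top_of_succMin_lt hΓ hs) hx0
  obtain ⟨n, hn⟩ := hΛΓ x hx y hy
  rw [hn, Int.cast_ne_zero] at hxy
  calc (1 : ℝ) ≤ |(n : ℝ)| := mod_cast Int.one_le_abs hxy
    _ = |⟪x, y⟫| := by rw [hn]
    _ ≤ ‖x‖ * ‖y‖ := abs_real_inner_le_norm x y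
    _ ≤ r * s := mul_le_mul hxr.le (mem_closedBall_zero_iff.mp hys) (norm_nonneg y)
      ((norm_nonneg x).trans hxr.le)

end SuccessiveMinima

section CoveringRadius

variable {d : ℕ} {Λ : Set (Euc d)} {L : Submodule ℤ (Euc d)} {r : ℝ}

theorem sInf_dist_le {y : Euc d} (hy : y ∈ Λ) (x : Euc d) : sInf (dist x '' Λ) ≤ dist x y :=
  csInf_le ⟨0, Set.forall_mem_image.mpr fun _ _ ↦ dist_nonneg⟩ ⟨y, hy, rfl⟩

theorem covRad_nonneg (Λ : Set (Euc d)) : 0 ≤ covRad Λ :=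
  Real.iSup_nonneg fun _ ↦ Real.sInf_nonneg (Set.forall_mem_image.mpr fun _ _ ↦ dist_nonneg)

theorem sInf_dist_le_of_span_eq_top (hr : 0 ≤ r)
    (hL : span ℝ ((L : Set (Euc d)) ∩ Metric.closedBall 0 r) = ⊤) (x : Euc d) :
    sInf (dist x '' (L : Set (Euc d))) ≤ √d / 2 * r := by
  obtain ⟨y, hy, hxy⟩ := exists_mem_dist_le_of_span_eq_top L hr hL x
  rw [finrank_euclideanSpace_fin] at hxy
  exact (sInf_dist_le hy x).trans hxy

theorem exists_mem_dist_le_of_covRad_lt (hL : span ℝ (L : Set (Euc d)) = ⊤)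
    (hr : covRad (L : Set (Euc d)) < r) (x : Euc d) : ∃ y ∈ L, dist x y ≤ r := by
  obtain ⟨s, hs0, hs⟩ := exists_span_inter_closedBall_eq_top hL
  have hbdd : BddAbove (Set.range fun x : Euc d ↦ sInf (dist x '' (L : Set (Euc d)))) :=
    ⟨_, Set.forall_mem_range.mpr (sInf_dist_le_of_span_eq_top hs0.le hs)⟩
  obtain ⟨-, ⟨y, hy, rfl⟩, hyr⟩ :=
    exists_lt_of_csInf_lt (by exact ⟨_, 0, L.zero_mem, rfl⟩) ((le_ciSup hbdd x).trans_lt hr)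
  exact ⟨y, hy, hyr.le⟩

theorem two_mul_covRad_le (hL : span ℝ (L : Set (Euc d)) = ⊤) :
    2 * covRad (L : Set (Euc d)) ≤ √d * succMin (L : Set (Euc d)) d := by
  refine le_mul_of_forall_lt₀ fun c hc r hr ↦ ?_
  have hr0 : 0 ≤ r := (succMin_nonneg _ _).trans hr.le
  have hcov : covRad (L : Set (Euc d)) ≤ √d / 2 * r :=
    ciSup_le (sInf_dist_le_of_span_eq_top hr0 (span_inter_closedBall_eq_top_of_succMin_lt hL hr))
  nlinarith

theorem succMin_le_two_mul_covRad (hL : span ℝ (L : Set (Euc d)) = ⊤) :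
    succMin (L : Set (Euc d)) d ≤ 2 * covRad (L : Set (Euc d)) := by
  refine le_of_forall_gt_imp_ge_of_dense fun r hr ↦ ?_
  obtain ⟨t, ht, htr⟩ := exists_between (show covRad (L : Set (Euc d)) < r / 2 by linarith)
  refine succMin_le (by linarith [covRad_nonneg (L : Set (Euc d))]) (le_finrank_iff_eq_top.mpr ?_)
  exact eq_top_of_forall_exists_dist_le _ (exists_mem_span_dist_le L (by linarith)
    (exists_mem_dist_le_of_covRad_lt hL ht))

end CoveringRadius

section MeshRatio

variable {d : ℕ} (L : Submodule ℤ (Euc d)) [DiscreteTopology L] [IsZLattice ℝ L]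

theorem sInf_dist_mul_succMin_one_dualLattice_le (hd : 2 ≤ d) (x : Euc d) :
    sInf (dist x '' (L : Set (Euc d))) * (2 * succMin (dualLattice L : Set (Euc d)) 1) ≤ d := by
  set r := sInf (dist x '' (L : Set (Euc d)))
  rcases le_or_gt r 0 with hr0 | hr0
  · have := mul_nonpos_of_nonpos_of_nonneg hr0
      (mul_nonneg zero_le_two (succMin_nonneg (dualLattice L : Set (Euc d)) 1))
    exact this.trans (Nat.cast_nonneg d)
  have : (0 : ℝ) < d := by positivity
  have hfar (z : Euc d) (hz : z ∈ L) : r ≤ ‖-x + z‖ := by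
    rw [neg_add_eq_sub, ← dist_eq_norm, dist_comm]
    exact sInf_dist_le hz x
  obtain ⟨y, hy, hyr, hcos⟩ := exists_mem_dualLattice_cos_ne_one (r₂ := d / 2 / r)
    (by rwa [finrank_euclideanSpace_fin]) hr0 (by positivity)
    (by rw [finrank_euclideanSpace_fin, mul_div_cancel₀ _ hr0.ne']) hfar
  have hy0 : y ≠ 0 := by
    rintro rfl
    simp at hcos
  have hmin : succMin (dualLattice L : Set (Euc d)) 1 ≤ ‖y‖ := succMin_one_le_norm hy hy0
  have := (lt_div_iff₀ hr0).mp (hmin.trans_lt hyr)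
  linarith

theorem two_mul_covRad_mul_succMin_one_dualLattice_le (hd : 2 ≤ d) :
    2 * covRad (L : Set (Euc d)) * succMin (dualLattice L : Set (Euc d)) 1 ≤ d := by
  have hmin := succMin_nonneg (dualLattice L : Set (Euc d)) 1
  rw [mul_comm 2, mul_assoc, covRad, Real.iSup_mul_of_nonneg (by positivity)]
  exact ciSup_le (sInf_dist_mul_succMin_one_dualLattice_le L hd)

theorem le_norm_add_of_two_mul_norm_eq_succMin_one {Λ : Set (Euc d)} {u x : Euc d} (hx : x ∈ Λ)
    (hu : 2 * ‖u‖ = succMin Λ 1) : ‖u‖ ≤ ‖u + x‖ := by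
  rcases eq_or_ne x 0 with rfl | hx0
  · rw [add_zero]
  · have htriangle : ‖x‖ ≤ ‖u + x‖ + ‖u‖ := by simpa using norm_sub_le (u + x) u
    linarith [succMin_one_le_norm hx hx0]

theorem succMin_one_mul_succMin_dualLattice_le (hd : 2 ≤ d) :
    succMin (L : Set (Euc d)) 1 * succMin (dualLattice L : Set (Euc d)) d ≤ d := by
  rcases (succMin_nonneg (L : Set (Euc d)) 1).eq_or_lt with hmin | hmin
  · rw [← hmin, zero_mul]
    exact Nat.cast_nonneg d
  set m := succMin (L : Set (Euc d)) 1
  have : (0 : ℝ) < d := by positivity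
  rw [← le_div_iff₀' hmin]
  refine succMin_le (by positivity) (le_finrank_iff_eq_top.mpr ?_)
  rw [← orthogonal_eq_bot_iff, eq_bot_iff]
  intro w hw
  by_contra hw0
  have hw0 : 0 < ‖w‖ := norm_pos_iff.mpr hw0
  set u := (m / 2 / ‖w‖) • w with hu
  have hnorm : ‖u‖ = m / 2 := by
    rw [norm_smul, Real.norm_of_nonneg (by positivity), div_mul_cancel₀ _ hw0.ne']
  obtain ⟨y, hy, hyr, hcos⟩ := exists_mem_dualLattice_cos_ne_one (r₁ := ‖u‖) (r₂ := d / m)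
    (by rwa [finrank_euclideanSpace_fin]) (by rw [hnorm]; positivity) (by positivity)
    (by rw [finrank_euclideanSpace_fin, hnorm]; field_simp)
    (fun x hx ↦ le_norm_add_of_two_mul_norm_eq_succMin_one (Λ := (L : Set (Euc d))) hx
      (by rw [hnorm]; ring))
  have hinner : ⟪y, w⟫ = 0 :=
    (mem_orthogonal _ _).mp hw y (subset_span ⟨hy, mem_closedBall_zero_iff.mpr hyr.le⟩)
  rw [hu, inner_smul_right, hinner] at hcos
  simp at hcos

theorem exists_mem_ne_zero_of_span_eq_top (hd : 1 ≤ d) {Λ : Set (Euc d)} (hΛ : span ℝ Λ = ⊤) :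
    ∃ x ∈ Λ, x ≠ 0 := by
  by_contra! h
  have hfinrank := le_finrank_iff_eq_top.mpr hΛ
  rw [span_eq_bot.mpr h, finrank_bot] at hfinrank
  omega

theorem coe_dualLattice (L : Submodule ℤ (Euc d)) :
    (dualLattice L : Set (Euc d)) = dualLat (L : Set (Euc d)) :=
  Set.ext fun _ ↦ mem_dualLattice

theorem exists_zlattice_of_isLatticeOf {Λ : Set (Euc d)} {T : Matrix (Fin d) (Fin d) ℝ}
    (hT : IsLatticeOf Λ T) : ∃ (L : Submodule ℤ (Euc d)) (_ : DiscreteTopology L),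
      IsZLattice ℝ L ∧ (L : Set (Euc d)) = Λ := by
  let b : Basis (Fin d) ℝ (Euc d) := (Pi.basisFun ℝ (Fin d)).map
    ((Matrix.toLin'OfInv (Matrix.nonsing_inv_mul T hT.1) (Matrix.mul_nonsing_inv T hT.1)).trans
      (WithLp.linearEquiv 2 ℝ (Fin d → ℝ)).symm)
  have hb (i j : Fin d) : b j i = T i j := by
    simp [b]
  refine ⟨span ℤ (Set.range b), inferInstance, inferInstance, ?_⟩
  rw [hT.2]
  ext v
  rw [SetLike.mem_coe, mem_span_range_iff_exists_fun]
  refine exists_congr fun k ↦ ?_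
  rw [eq_comm, PiLp.ext_iff]
  simp [hb, mul_comm]

theorem one_le_succMin_one_mul_succMin_dualLattice (hd : 1 ≤ d) :
    1 ≤ succMin (L : Set (Euc d)) 1 * succMin (dualLattice L : Set (Euc d)) d :=
  one_le_succMin_one_mul_succMin (exists_mem_ne_zero_of_span_eq_top hd IsZLattice.span_top)
    IsZLattice.span_top fun x hx _ hy ↦ mem_dualLattice.mp hy x hx

theorem one_le_succMin_one_dualLattice_mul_succMin (hd : 1 ≤ d) :
    1 ≤ succMin (dualLattice L : Set (Euc d)) 1 * succMin (L : Set (Euc d)) d :=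
  one_le_succMin_one_mul_succMin (exists_mem_ne_zero_of_span_eq_top hd IsZLattice.span_top)
    IsZLattice.span_top fun y hy x hx ↦ by
      simpa only [real_inner_comm] using mem_dualLattice.mp hy x hx

theorem succMin_one_pos (hd : 1 ≤ d) : 0 < succMin (L : Set (Euc d)) 1 :=
  pos_of_mul_pos_left (one_pos.trans_le (one_le_succMin_one_mul_succMin_dualLattice L hd))
    (succMin_nonneg _ _)

theorem meshRatio_eq_two_mul_covRad_div (hd : 1 ≤ d) : meshRatio (L : Set (Euc d)) =
    2 * covRad (L : Set (Euc d)) / succMin (L : Set (Euc d)) 1 := by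
  rw [meshRatio, sepRad_eq_succMin_one_div_two
    (exists_mem_ne_zero_of_span_eq_top hd IsZLattice.span_top), div_div_eq_mul_div, mul_comm]

theorem succMin_div_le_meshRatio (hd : 1 ≤ d) :
    succMin (L : Set (Euc d)) d / succMin (L : Set (Euc d)) 1 ≤ meshRatio (L : Set (Euc d)) := by
  rw [meshRatio_eq_two_mul_covRad_div L hd]
  exact div_le_div_of_nonneg_right (succMin_le_two_mul_covRad IsZLattice.span_top)
    (succMin_nonneg _ _)

theorem meshRatio_le_sqrt_mul_succMin_div (hd : 1 ≤ d) : meshRatio (L : Set (Euc d)) ≤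
    √d * (succMin (L : Set (Euc d)) d / succMin (L : Set (Euc d)) 1) := by
  rw [meshRatio_eq_two_mul_covRad_div L hd, ← mul_div_assoc]
  exact div_le_div_of_nonneg_right (two_mul_covRad_le IsZLattice.span_top) (succMin_nonneg _ _)

theorem meshRatio_euc_one (L : Submodule ℤ (Euc 1)) [DiscreteTopology L] [IsZLattice ℝ L] :
    meshRatio (L : Set (Euc 1)) = 1 := by
  have hratio : succMin (L : Set (Euc 1)) 1 / succMin (L : Set (Euc 1)) 1 = 1 :=
    div_self (succMin_one_pos L le_rfl).ne'
  have hlower := succMin_div_le_meshRatio L le_rfl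
  have hupper := meshRatio_le_sqrt_mul_succMin_div L le_rfl
  rw [hratio] at hlower hupper
  exact le_antisymm (by simpa using hupper) hlower

theorem inv_mul_succMin_dualLattice_div_le_meshRatio (hd : 1 ≤ d) :
    (d : ℝ)⁻¹ * (succMin (dualLattice L : Set (Euc d)) d /
      succMin (dualLattice L : Set (Euc d)) 1) ≤ meshRatio (L : Set (Euc d)) := by
  have hdual := succMin_one_pos (dualLattice L) hd
  rcases hd.eq_or_lt with rfl | hd₂
  · rw [meshRatio_euc_one, div_self hdual.ne']
    simp
  have hmin := succMin_one_pos L hd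
  have : (0 : ℝ) < d := by positivity
  have hone : 1 ≤ succMin (dualLattice L : Set (Euc d)) 1 * (2 * covRad (L : Set (Euc d))) :=
    (one_le_succMin_one_dualLattice_mul_succMin L hd).trans
      (mul_le_mul_of_nonneg_left (succMin_le_two_mul_covRad IsZLattice.span_top) hdual.le)
  rw [meshRatio_eq_two_mul_covRad_div L hd, inv_mul_eq_div, div_div,
    div_le_div_iff₀ (by positivity) hmin]
  nlinarith [succMin_one_mul_succMin_dualLattice_le L hd₂]

theorem meshRatio_le_mul_succMin_dualLattice_div (hd : 1 ≤ d) : meshRatio (L : Set (Euc d)) ≤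
    d * (succMin (dualLattice L : Set (Euc d)) d / succMin (dualLattice L : Set (Euc d)) 1) := by
  have hdual := succMin_one_pos (dualLattice L) hd
  rcases hd.eq_or_lt with rfl | hd₂
  · rw [meshRatio_euc_one, div_self hdual.ne']
    simp
  rw [meshRatio_eq_two_mul_covRad_div L hd, ← mul_div_assoc,
    div_le_div_iff₀ (succMin_one_pos L hd) hdual]
  nlinarith [two_mul_covRad_mul_succMin_one_dualLattice_le L hd₂,
    one_le_succMin_one_mul_succMin_dualLattice L hd, Nat.cast_nonneg (α := ℝ) d]

end MeshRatio

theorem stmt1 {d : ℕ} (hd : 1 ≤ d) (Λ : Set (Euc d)) (T : Matrix (Fin d) (Fin d) ℝ)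
    (hT : IsLatticeOf Λ T) :
    max (succMin Λ d / succMin Λ 1)
        ((d : ℝ)⁻¹ * (succMin (dualLat Λ) d / succMin (dualLat Λ) 1)) ≤ meshRatio Λ ∧
    meshRatio Λ ≤ min (Real.sqrt d * (succMin Λ d / succMin Λ 1))
        (d * (succMin (dualLat Λ) d / succMin (dualLat Λ) 1)) := by
  obtain ⟨L, _, _, rfl⟩ := exists_zlattice_of_isLatticeOf hT
  rw [← coe_dualLattice]
  exact ⟨max_le (succMin_div_le_meshRatio L hd) (inv_mul_succMin_dualLattice_div_le_meshRatio L hd),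
    le_min (meshRatio_le_sqrt_mul_succMin_div L hd) (meshRatio_le_mul_succMin_dualLattice_div L hd)⟩

end
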